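/- Let r be a positive integer, let ψ be the distribution degenerate at r, let 𝒢=(V,E,λ) be a sample from Γ_{[n]}(ψ), and let 𝒢^O be its order discretization. Then for any constant ε>0, with probability tending to 1 as n→∞, Double(𝒢^O) ≥ (1−ε)·n·log n. -/

import Mathlib

open MeasureTheory ProbabilityTheory Filter Set
open scoped ENNReal NNReal Topology

noncomputable section

namespace RTG

/-- A temporal graph on vertex type `V`, given by the finite set of real time labels
attached to each potential edge (unordered pair of vertices). -/
abbrev TGraph (V : Type*) := Sym2 V → Finset ℝ

/-- `P` is a strict partial order supported on the set `s`. -/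
def StrictPartialOrderOn {α : Type*} (s : Set α) (P : α → α → Prop) : Prop :=
  (∀ a, ¬ P a a) ∧ (∀ a b c, P a b → P b c → P a c) ∧ ∀ a b, P a b → a ∈ s ∧ b ∈ s

/-- The temporal graph `Λ` contains `(H, P)` as a `δ`-temporal motif. -/
def Contains {VH V : Type*} (H : SimpleGraph VH) (P : Sym2 VH → Sym2 VH → Prop)
    (Λ : TGraph V) (δ : ℝ) : Prop :=
  ∃ Φ : VH → V, Function.Injective Φ ∧
    ∃ lab : Sym2 VH → ℝ,
      (∀ e ∈ H.edgeSet, lab e ∈ Λ (Sym2.map Φ e)) ∧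
      (∀ e f, P e f → lab e < lab f) ∧
      (∀ e ∈ H.edgeSet, ∀ f ∈ H.edgeSet, lab e - lab f < δ)

/-- The sparsity `ρ_H` of a graph `H`: the minimum over subgraphs with at least two
edges of `|V_I| / (|E_I| - 1)`. -/
def sparsity {VH : Type*} (H : SimpleGraph VH) : ℝ :=
  sInf {x : ℝ | ∃ I : H.Subgraph, 2 ≤ I.edgeSet.ncard ∧
    x = (I.verts.ncard : ℝ) / ((I.edgeSet.ncard : ℝ) - 1)}

/-- The space of label data on a single edge: a number `k` of labels together with the
tuple of `k` label values (indexed in order of sampling). -/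
abbrev LabelSpace := Σ k : ℕ, Fin k → ℝ

/-- The uniform distribution on `(0, 1]`. -/
def unif01 : Measure ℝ := volume.restrict (Set.Ioc 0 1)

/-- The uniform distribution on `{1, …, T}` (as a measure on `ℝ`). -/
def unifDisc (T : ℕ) : Measure ℝ :=
  (T : ℝ≥0∞)⁻¹ • ∑ k ∈ Finset.Icc 1 T, Measure.dirac (k : ℝ)

/-- The distribution of the label data of a single edge: the number of labels is drawn
according to `ψ` and, independently, each label value is drawn according to `ν`. -/
def edgeMeasure (ν : Measure ℝ) (ψ : Measure ℕ) : Measure LabelSpace :=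
  Measure.sum fun k => ψ {k} • (Measure.pi fun _ : Fin k => ν).map (Sigma.mk k)

/-- The doubly random temporal graph model on vertex set `V` with label value
distribution `ν` and label multiplicity distribution `ψ`: all edges receive independent
identically distributed label data. -/
def model (V : Type*) [Fintype V] [DecidableEq V] (ν : Measure ℝ) (ψ : Measure ℕ) :
    Measure (Sym2 V → LabelSpace) :=
  Measure.pi fun _ : Sym2 V => edgeMeasure ν ψ

/-- The continuous doubly random temporal graph `Γ_V(ψ)`. -/
abbrev contModel (V : Type*) [Fintype V] [DecidableEq V] (ψ : Measure ℕ) :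
    Measure (Sym2 V → LabelSpace) := model V unif01 ψ

/-- The discrete doubly random temporal graph `Γ_V(ψ, T)`. -/
abbrev discModel (V : Type*) [Fintype V] [DecidableEq V] (ψ : Measure ℕ) (T : ℕ) :
    Measure (Sym2 V → LabelSpace) := model V (unifDisc T) ψ

/-- The temporal graph determined by a sample `ω` of the model: each non-loop edge
carries the sampled set of labels. -/
def toTGraph {V : Type*} [DecidableEq V] (ω : Sym2 V → LabelSpace) : TGraph V :=
  fun e => if e.IsDiag then ∅ else Finset.image (ω e).2 Finset.univ

/-- The `T`-discretization of a temporal graph: each label `l` is replaced by `⌈T·l⌉`. -/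
def discretize {V : Type*} (T : ℕ) (Λ : TGraph V) : TGraph V :=
  fun e => (Λ e).image fun l => ((⌈(T : ℝ) * l⌉ : ℤ) : ℝ)

/-- `ψ` is a label multiplicity distribution: a probability distribution on `ℕ` with
positive finite mean and finite second moment. -/
def IsLMD (ψ : Measure ℕ) : Prop :=
  IsProbabilityMeasure ψ ∧ Integrable (fun k : ℕ => (k : ℝ)) ψ ∧
    Integrable (fun k : ℕ => (k : ℝ) ^ 2) ψ ∧ 0 < ∫ k, (k : ℝ) ∂ψ

/-- The mean `r` of a label multiplicity distribution. -/
def lmdMean (ψ : Measure ℕ) : ℝ := ∫ k, (k : ℝ) ∂ψ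

/-- The second moment `r₂` of a label multiplicity distribution. -/
def lmdSq (ψ : Measure ℕ) : ℝ := ∫ k, (k : ℝ) ^ 2 ∂ψ

/-- `q = P[Q > 0]` for a label multiplicity distribution. -/
def lmdPos (ψ : Measure ℕ) : ℝ := (ψ {k | 0 < k}).toReal

/-- `v` is reachable from the set `S` by time `t` in the temporal graph `Λ`. -/
def ReachBy {V : Type*} (Λ : TGraph V) (S : Set V) (t : ℝ) (v : V) : Prop :=
  v ∈ S ∨ ∃ (k : ℕ) (f : ℕ → V) (ts : ℕ → ℝ), 0 < k ∧ f 0 ∈ S ∧ f k = v ∧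
    (∀ i < k, ts i ∈ Λ s(f i, f (i + 1))) ∧
    (∀ i j, i < j → j < k → ts i < ts j) ∧ ts (k - 1) ≤ t

/-- The reachability ball `B_Λ(S, t)`. -/
def ball {V : Type*} (Λ : TGraph V) (S : Set V) (t : ℝ) : Set V := {v | ReachBy Λ S t v}

/-- The doubling time of the set `S` in `Λ` (with value `∞` if the reachability ball
never doubles in size). -/
def doubleTime {V : Type*} (Λ : TGraph V) (S : Set V) : ℝ≥0∞ :=
  ⨅ (t : ℝ) (_ : 0 ≤ t ∧ 2 * S.ncard ≤ (ball Λ S t).ncard), ENNReal.ofReal t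

/-- The doubling time of the temporal graph `Λ`: the maximum doubling time over all
nonempty vertex sets of size at most half the number of vertices. -/
def doubleAll {V : Type*} [Fintype V] (Λ : TGraph V) : ℝ≥0∞ :=
  ⨆ (S : Set V) (_ : S.Nonempty ∧ 2 * S.ncard ≤ Fintype.card V), doubleTime Λ S

/-- `Double⁻`: the maximum doubling time over nonempty sets of size at most `n/4`. -/
def doubleSmall {V : Type*} [Fintype V] (Λ : TGraph V) : ℝ≥0∞ :=
  ⨆ (S : Set V) (_ : S.Nonempty ∧ 4 * S.ncard ≤ Fintype.card V), doubleTime Λ S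

/-- `Double⁺`: the maximum doubling time over sets of size in `(n/4, n/2]`. -/
def doubleLarge {V : Type*} [Fintype V] (Λ : TGraph V) : ℝ≥0∞ :=
  ⨆ (S : Set V) (_ : Fintype.card V < 4 * S.ncard ∧ 2 * S.ncard ≤ Fintype.card V),
    doubleTime Λ S

/-- The partial reversal `ℛ(Λ, t)`: every label `l < t` is replaced by `t - l`. -/
def reverse {V : Type*} (Λ : TGraph V) (t : ℝ) : TGraph V :=
  fun e => (Λ e).image fun l => if l < t then t - l else l

/-- The rank of a time `x` among all the labels of the sample `ω`: the number of labels
(on genuine, non-loop, edges) that are at most `x`. -/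
def rank {V : Type*} [Fintype V] [DecidableEq V] (ω : Sym2 V → LabelSpace) (x : ℝ) : ℕ :=
  ∑ e ∈ Finset.univ.filter (fun e : Sym2 V => ¬ e.IsDiag),
    Nat.card {i : Fin (ω e).1 // (ω e).2 i ≤ x}

/-- The order discretization `𝒢^O` of the sample `ω`: each label is replaced by its rank
among all labels. -/
def orderDisc {V : Type*} [Fintype V] [DecidableEq V] (ω : Sym2 V → LabelSpace) :
    TGraph V :=
  fun e => if e.IsDiag then ∅
    else Finset.image (fun i => (rank ω ((ω e).2 i) : ℝ)) Finset.univ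

/-!
Let `a = (1 - η) log n / (r n)` and `b = 2 a`. By the second moment method, about `(1 - η) n log n`
labels are at most `b`, so it suffices to find a set of `⌊n / 2⌋` vertices that has not doubled at
the time `b` of the original labelling.

Call a vertex quiet if no label on its edges lies in `(a, b]`. A vertex is quiet with probability
about `n ^ (η - 1)` and the correlations are weak, so about `n ^ η` vertices are quiet. A temporal
walk that reaches a quiet vertex by time `b` reaches it by time `a`. There are `n ^ (k + 1) r ^ k`
labelled walks with `k` steps, each is temporal up to time `a` with probability at most
`a ^ k / k!`, and quietness of the endpoint is nearly independent of this. Hence the expected number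
of pairs of a quiet vertex and an early source of it is of order at most
`n * exp (r n a) * n ^ (η - 1) = n`, far fewer than the `n ^ (1 + η)` pairs available. So there are
two quiet vertices with fewer than `n / 4` early sources each. A set of `⌊n / 2⌋` vertices avoiding
all these sources misses both vertices up to time `b`, and `n - 2 < 2 ⌊n / 2⌋`.
-/

section Occurrences

variable {Ω J : Type*}

open Classical in
/-- The number of the events `E j`, `j ∈ s`, that occur at `ω`: the counting variable to which the
first and second moment methods are applied. -/
def occurrences (s : Finset J) (E : J → Set Ω) (ω : Ω) : ℕ :=
  (s.filter fun j => ω ∈ E j).card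

lemma cast_occurrences (s : Finset J) (E : J → Set Ω) (ω : Ω) :
    (occurrences s E ω : ℝ) = ∑ j ∈ s, (E j).indicator (1 : Ω → ℝ) ω := by
  classical
  simp [occurrences, indicator_apply, Finset.sum_boole]

variable [MeasurableSpace Ω] {P : Measure Ω} {s : Finset J} {E : J → Set Ω}

lemma memLp_indicator_one [IsFiniteMeasure P] {A : Set Ω} (hA : MeasurableSet A) (p : ℝ≥0∞) :
    MemLp (A.indicator (1 : Ω → ℝ)) p P :=
  (memLp_const 1).indicator hA

lemma memLp_occurrences [IsFiniteMeasure P] (hE : ∀ j ∈ s, MeasurableSet (E j)) (p : ℝ≥0∞) :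
    MemLp (fun ω => (occurrences s E ω : ℝ)) p P := by
  simp only [cast_occurrences]
  exact memLp_finsetSum s fun j hj => memLp_indicator_one (hE j hj) p

lemma integral_occurrences [IsFiniteMeasure P] (hE : ∀ j ∈ s, MeasurableSet (E j)) :
    ∫ ω, (occurrences s E ω : ℝ) ∂P = ∑ j ∈ s, P.real (E j) := by
  simp only [cast_occurrences]
  rw [integral_finsetSum s fun j hj => (memLp_indicator_one (hE j hj) 1).integrable le_rfl]
  exact Finset.sum_congr rfl fun j hj => integral_indicator_one (hE j hj)

lemma mul_measureReal_le_occurrences_le [IsFiniteMeasure P] (hE : ∀ j ∈ s, MeasurableSet (E j))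
    (K : ℝ) : K * P.real {ω | K ≤ occurrences s E ω} ≤ ∑ j ∈ s, P.real (E j) := by
  rw [← integral_occurrences hE]
  exact mul_meas_ge_le_integral_of_nonneg (Eventually.of_forall fun ω => Nat.cast_nonneg _)
    ((memLp_occurrences hE 1).integrable le_rfl) K

lemma covariance_indicator_one [IsProbabilityMeasure P] {A B : Set Ω} (hA : MeasurableSet A)
    (hB : MeasurableSet B) :
    cov[A.indicator (1 : Ω → ℝ), B.indicator (1 : Ω → ℝ); P] =
      P.real (A ∩ B) - P.real A * P.real B := by
  rw [covariance_eq_sub (memLp_indicator_one hA 2) (memLp_indicator_one hB 2),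
    ← inter_indicator_one, integral_indicator_one hA, integral_indicator_one hB,
    integral_indicator_one (hA.inter hB)]

lemma variance_occurrences_le [IsProbabilityMeasure P] (hE : ∀ j ∈ s, MeasurableSet (E j)) {δ : ℝ}
    (hδ : 0 ≤ δ) (hpair : ∀ i ∈ s, ∀ j ∈ s, i ≠ j →
      P.real (E i ∩ E j) ≤ (1 + δ) * (P.real (E i) * P.real (E j))) :
    Var[fun ω => (occurrences s E ω : ℝ); P] ≤
      ∑ j ∈ s, P.real (E j) + δ * (∑ j ∈ s, P.real (E j)) ^ 2 := by
  classical
  have hcov : ∀ i ∈ s, ∀ j ∈ s, cov[(E i).indicator (1 : Ω → ℝ), (E j).indicator (1 : Ω → ℝ); P] ≤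
      (if i = j then P.real (E i) else 0) + δ * (P.real (E i) * P.real (E j)) := by
    intro i hi j hj
    rw [covariance_indicator_one (hE i hi) (hE j hj)]
    split_ifs with hij
    · subst hij
      rw [inter_self]
      nlinarith [mul_nonneg hδ (mul_self_nonneg (P.real (E i))), mul_self_nonneg (P.real (E i))]
    · linarith [hpair i hi j hj hij]
  simp only [cast_occurrences]
  rw [variance_fun_sum' fun j hj => memLp_indicator_one (hE j hj) 2]
  refine (Finset.sum_le_sum fun i hi => Finset.sum_le_sum (hcov i hi)).trans_eq ?_
  simp only [Finset.sum_add_distrib, Finset.sum_ite_eq, ← Finset.mul_sum, sq, Finset.sum_mul_sum]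
  exact congrArg (· + _) (Finset.sum_congr rfl fun i hi => if_pos hi)

lemma measureReal_occurrences_le_le [IsProbabilityMeasure P] (hE : ∀ j ∈ s, MeasurableSet (E j))
    {δ η m : ℝ} (hδ : 0 ≤ δ) (hη : 0 < η) (hsum : ∑ j ∈ s, P.real (E j) = m) (hm : 0 < m)
    (hpair : ∀ i ∈ s, ∀ j ∈ s, i ≠ j →
      P.real (E i ∩ E j) ≤ (1 + δ) * (P.real (E i) * P.real (E j))) :
    P.real {ω | (occurrences s E ω : ℝ) ≤ (1 - η) * m} ≤ (m⁻¹ + δ) / η ^ 2 := by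
  set N : Ω → ℝ := fun ω => occurrences s E ω
  have hmean : P[N] = m := (integral_occurrences hE).trans hsum
  have hvar : Var[N; P] ≤ m + δ * m ^ 2 := hsum ▸ variance_occurrences_le hE hδ hpair
  have hcheb := ENNReal.toReal_mono ENNReal.ofReal_ne_top
    (meas_ge_le_variance_div_sq (memLp_occurrences hE 2) (mul_pos hη hm) (μ := P))
  rw [ENNReal.toReal_ofReal (div_nonneg (variance_nonneg _ _) (sq_nonneg _)), hmean] at hcheb
  calc P.real {ω | N ω ≤ (1 - η) * m}
      ≤ P.real {ω | η * m ≤ |N ω - m|} := by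
        refine measureReal_mono (fun ω hω => ?_)
        rw [mem_ofPred_eq] at hω ⊢
        linarith [neg_le_abs (N ω - m)]
    _ ≤ Var[N; P] / (η * m) ^ 2 := hcheb
    _ ≤ (m + δ * m ^ 2) / (η * m) ^ 2 := by gcongr
    _ = (m⁻¹ + δ) / η ^ 2 := by field_simp

end Occurrences

section Product

variable {α : Type*} [MeasurableSpace α] (ν : Measure α) [IsProbabilityMeasure ν]

lemma pi_real_pi {ι : Type*} [Fintype ι] (D : Finset ι) (A : Set α) :
    (Measure.pi fun _ : ι => ν).real ((D : Set ι).pi fun _ => A) = ν.real A ^ D.card := by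
  simp [measureReal_def, Measure.pi_pi_finset]

lemma iIndepFun_eval_pi (ι : Type*) [Fintype ι] :
    iIndepFun (fun (i : ι) (X : ι → α) => X i) (Measure.pi fun _ : ι => ν) :=
  iIndepFun_pi (X := fun _ => id) fun _ => aemeasurable_id

lemma pi_map_comp {ι κ : Type*} [Fintype ι] [Fintype κ] {c : κ → ι} (hc : Function.Injective c) :
    (Measure.pi fun _ : ι => ν).map (fun X => X ∘ c) = Measure.pi fun _ : κ => ν := by
  have := ((iIndepFun_eval_pi ν ι).precomp hc).map_fun_eq_pi_map fun j =>
    (measurable_pi_apply (c j)).aemeasurable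
  simp only [(measurePreserving_eval (fun _ : ι => ν) _).map_eq] at this
  exact this

lemma pi_real_comp_inter_pi {ι κ : Type*} [Fintype ι] [Fintype κ] {c : κ → ι}
    (hc : Function.Injective c) {D : Finset ι} (hD : ∀ j, c j ∉ D) {U : Set (κ → α)}
    (hU : MeasurableSet U) {A : Set α} (hA : MeasurableSet A) :
    (Measure.pi fun _ : ι => ν).real ({X | X ∘ c ∈ U} ∩ (D : Set ι).pi fun _ => A) =
      (Measure.pi fun _ : κ => ν).real U * ν.real A ^ D.card := by
  classical
  have hdisj : Disjoint (Finset.univ.image c) D := by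
    rw [Finset.disjoint_left]
    simpa using hD
  have hcomp : IndepFun (fun X : ι → α => X ∘ c) (fun X (i : D) => X i)
      (Measure.pi fun _ : ι => ν) :=
    ((iIndepFun_eval_pi ν ι).indepFun_finset _ D hdisj measurable_pi_apply).comp
      (φ := fun (Y : Finset.univ.image c → α) (j : κ) =>
        Y ⟨c j, Finset.mem_image_of_mem c (Finset.mem_univ j)⟩)
      (ψ := id) (by fun_prop) measurable_id
  have hbox : (D : Set ι).pi (fun _ => A) =
      (fun X (i : D) => X i) ⁻¹' (univ : Set D).pi fun _ => A := by
    ext X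
    simp
  rw [← pi_real_pi, ← pi_map_comp ν hc, map_measureReal_apply (by fun_prop) hU, hbox,
    measureReal_def, measureReal_def, measureReal_def, ← ENNReal.toReal_mul]
  exact congrArg _ (hcomp.measure_inter_preimage_eq_mul _ _ hU
    (MeasurableSet.univ_pi fun _ => hA))

variable [LinearOrder α] [TopologicalSpace α] [OrderClosedTopology α] [OpensMeasurableSpace α]
  [SecondCountableTopology α]

lemma measurableSet_strictMono_mem {ι : Type*} [Countable ι] [Preorder ι] {B : Set α}
    (hB : MeasurableSet B) : MeasurableSet {x : ι → α | StrictMono x ∧ ∀ j, x j ∈ B} := by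
  have : {x : ι → α | StrictMono x ∧ ∀ j, x j ∈ B} =
      (⋂ (i) (j) (_ : i < j), {x | x i < x j}) ∩ univ.pi fun _ => B := by
    ext x
    simp [StrictMono]
  rw [this]
  refine .inter (.iInter fun i => .iInter fun j => .iInter fun _ => ?_)
    (MeasurableSet.univ_pi fun _ => hB)
  exact measurableSet_lt (measurable_pi_apply i) (measurable_pi_apply j)

-- The `k!` reorderings of this event are equiprobable, pairwise disjoint and contained in `Bᵏ`.
lemma pi_real_strictMono_mem_le (k : ℕ) {B : Set α} (hB : MeasurableSet B) :
    (Measure.pi fun _ : Fin k => ν).real {x | StrictMono x ∧ ∀ j, x j ∈ B} ≤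
      ν.real B ^ k / k.factorial := by
  set F : Set (Fin k → α) := {x | StrictMono x ∧ ∀ j, x j ∈ B}
  set G : Equiv.Perm (Fin k) → Set (Fin k → α) := fun σ => {x | x ∘ σ ∈ F}
  have hF : MeasurableSet F := measurableSet_strictMono_mem hB
  have hG : ∀ σ, MeasurableSet (G σ) := fun σ =>
    hF.preimage (by fun_prop : Measurable fun x : Fin k → α => x ∘ σ)
  have hequi : ∀ σ, (Measure.pi fun _ : Fin k => ν).real (G σ) =
      (Measure.pi fun _ : Fin k => ν).real F := fun σ => by
    conv_rhs => rw [← pi_map_comp ν σ.injective, map_measureReal_apply (by fun_prop) hF]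
    rfl
  have hdisj : Pairwise (Function.onFun Disjoint G) := by
    refine fun σ τ hστ => Set.disjoint_left.2 fun x hσ hτ => hστ ?_
    have hx : x ∘ σ = x ∘ τ := (hσ.1.range_inj hτ.1).1 <| by
      simp only [EquivLike.range_comp]
    have hinj : Function.Injective x := by
      simpa using hσ.1.injective.of_comp_right σ.surjective
    exact Equiv.ext fun i => hinj (congrFun hx i)
  have hsub : ⋃ σ, G σ ⊆ ((Finset.univ : Finset (Fin k)) : Set (Fin k)).pi fun _ => B := by
    refine iUnion_subset fun σ x hx j _ => ?_
    simpa using hx.2 (σ.symm j)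
  rw [le_div_iff₀ (by positivity), mul_comm]
  calc (k.factorial : ℝ) * (Measure.pi fun _ : Fin k => ν).real F
      = ∑ σ, (Measure.pi fun _ : Fin k => ν).real (G σ) := by
        simp [hequi, Fintype.card_perm]
    _ = (Measure.pi fun _ : Fin k => ν).real (⋃ σ, G σ) :=
        (measureReal_iUnion_fintype hdisj hG).symm
    _ ≤ ν.real B ^ k := by
        simpa using (measureReal_mono hsub).trans_eq (pi_real_pi ν Finset.univ B)

end Product

lemma tendsto_measure_map_one {ι : Type*} {l : Filter ι} {Ω Ω' : ι → Type*}
    [∀ i, MeasurableSpace (Ω i)] [∀ i, MeasurableSpace (Ω' i)] {P : ∀ i, Measure (Ω i)}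
    [∀ i, IsProbabilityMeasure (P i)] {f : ∀ i, Ω i → Ω' i} (hf : ∀ i, Measurable (f i))
    {A : ∀ i, Set (Ω' i)} (h : Tendsto (fun i => (P i).real (f i ⁻¹' A i)ᶜ) l (𝓝 0)) :
    Tendsto (fun i => (P i).map (f i) (A i)) l (𝓝 1) := by
  have (i : ι) : IsProbabilityMeasure ((P i).map (f i)) :=
    Measure.isProbabilityMeasure_map (hf i).aemeasurable
  have hlow : Tendsto (fun i => 1 - P i (f i ⁻¹' A i)ᶜ) l (𝓝 1) := by
    have hcompl : Tendsto (fun i => P i (f i ⁻¹' A i)ᶜ) l (𝓝 0) := by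
      simpa using ENNReal.tendsto_ofReal h
    simpa using ENNReal.Tendsto.sub tendsto_const_nhds hcompl (.inl ENNReal.one_ne_top)
  refine tendsto_of_tendsto_of_tendsto_of_le_of_le hlow tendsto_const_nhds (fun i => ?_)
    fun i => prob_le_one
  refine (tsub_le_iff_right.2 ?_).trans (Measure.le_map_apply (hf i).aemeasurable _)
  simpa using measure_univ_le_add_compl (μ := P i) (f i ⁻¹' A i)

section Model

lemma measurable_sigmaMk (r : ℕ) : Measurable fun f : Fin r → ℝ => (⟨r, f⟩ : LabelSpace) :=
  fun _ hs => MeasurableSpace.measurableSet_iInf.1 hs r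

lemma edgeMeasure_dirac (ν : Measure ℝ) (r : ℕ) :
    edgeMeasure ν (Measure.dirac r) = (Measure.pi fun _ : Fin r => ν).map (Sigma.mk r) := by
  ext s hs
  rw [edgeMeasure, Measure.sum_apply _ hs, tsum_eq_single r fun k hk => by simp [hk.symm]]
  simp

variable {V : Type*}

/-- A slot holds one of the `r` labels of an unordered pair of vertices. -/
abbrev Slot (V : Type*) (r : ℕ) := Sym2 V × Fin r

/-- The sample of the model in which every pair of vertices has `r` labels, read off from an array
of label values. Diagonal pairs get labels too, since `model` assigns label data to all of
`Sym2 V`. -/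
def sampleOf {r : ℕ} (X : Slot V r → ℝ) : Sym2 V → LabelSpace :=
  fun e => ⟨r, fun i => X (e, i)⟩

lemma measurable_sampleOf {r : ℕ} : Measurable (sampleOf : (Slot V r → ℝ) → _) :=
  measurable_pi_lambda _ fun _ => (measurable_sigmaMk r).comp (by fun_prop)

lemma model_dirac [Fintype V] [DecidableEq V] (ν : Measure ℝ) [IsProbabilityMeasure ν] (r : ℕ) :
    model V ν (Measure.dirac r) = (Measure.pi fun _ : Slot V r => ν).map sampleOf := by
  have hmk := measurable_sigmaMk r
  have hmks : Measurable fun (Y : Sym2 V → Fin r → ℝ) e => (⟨r, Y e⟩ : LabelSpace) :=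
    measurable_pi_lambda _ fun e => hmk.comp (measurable_pi_apply e)
  have : IsProbabilityMeasure ((Measure.pi fun _ : Fin r => ν).map (Sigma.mk r)) :=
    Measure.isProbabilityMeasure_map hmk.aemeasurable
  have hcurry := Measure.infinitePi_map_curry (ι := Sym2 V) (κ := Fin r) (μ := fun _ _ => ν)
  simp only [Measure.infinitePi_eq_pi] at hcurry
  simp only [model, edgeMeasure_dirac]
  rw [← Measure.pi_map_pi (f := fun _ : Sym2 V => Sigma.mk r) fun _ => hmk.aemeasurable, ← hcurry,
    Measure.map_map hmks (MeasurableEquiv.measurable _)]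
  rfl

end Model

section Slots

variable (V : Type*) [Fintype V] [DecidableEq V] (r : ℕ)

/-- The slots on genuine (non-loop) edges, which are the only ones that `orderDisc` and `rank`
see. -/
def edgeSlots : Finset (Slot V r) := (⊤ : SimpleGraph V).edgeFinset ×ˢ Finset.univ

lemma card_edgeSlots : (edgeSlots V r).card = (Fintype.card V).choose 2 * r := by
  rw [edgeSlots, Finset.card_product, SimpleGraph.card_edgeFinset_top_eq_card_choose_two,
    Finset.card_univ, Fintype.card_fin]

variable {V}

/-- The slots on the genuine edges at the vertex `w`. -/
def starSlots (w : V) : Finset (Slot V r) := (⊤ : SimpleGraph V).incidenceFinset w ×ˢ Finset.univ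

lemma mem_starSlots {r : ℕ} {w : V} {p : Slot V r} :
    p ∈ starSlots r w ↔ ¬p.1.IsDiag ∧ w ∈ p.1 := by
  simp [starSlots, SimpleGraph.incidenceSet]

lemma card_starSlots (w : V) : (starSlots r w).card = r * (Fintype.card V - 1) := by
  simp [starSlots, mul_comm]

lemma card_starSlots_inter_le {v w : V} (hvw : v ≠ w) :
    (starSlots r v ∩ starSlots r w).card ≤ r := by
  have hsub : starSlots r v ∩ starSlots r w ⊆ {s(v, w)} ×ˢ (Finset.univ : Finset (Fin r)) := by
    intro p hp
    simp only [Finset.mem_inter, mem_starSlots] at hp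
    rw [Finset.mem_product, Finset.mem_singleton, ← Sym2.mem_and_mem_iff hvw]
    exact ⟨⟨hp.1.2, hp.2.2⟩, Finset.mem_univ _⟩
  simpa using Finset.card_le_card hsub

variable {r}

lemma rank_sampleOf (X : Slot V r → ℝ) (x : ℝ) :
    rank (sampleOf X) x = occurrences (edgeSlots V r) (fun p => {X | X p ≤ x}) X := by
  classical
  rw [occurrences, edgeSlots, Finset.card_filter, Finset.sum_product, rank]
  refine Finset.sum_congr (by ext; simp) fun e _ => ?_
  rw [Nat.card_eq_fintype_card, Fintype.card_subtype, Finset.card_filter]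
  rfl

lemma rank_mono (ω : Sym2 V → LabelSpace) : Monotone (rank ω) := by
  intro x y hxy
  exact Finset.sum_le_sum fun e _ => Nat.card_mono (toFinite _) fun i (hi : _ ≤ x) => hi.trans hxy

end Slots

section Walks

variable {V : Type*}

lemma exists_firstHit_of_reachBy {Λ : TGraph V} {S : Set V} {t : ℝ} {w : V}
    (h : ReachBy Λ S t w) :
    ∃ (k : ℕ) (f : ℕ → V) (ts : ℕ → ℝ), f 0 ∈ S ∧ f k = w ∧ (∀ i < k, f i ≠ w) ∧
      (∀ i < k, ts i ∈ Λ s(f i, f (i + 1))) ∧ (∀ i j, i < j → j < k → ts i < ts j) ∧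
      ∀ i < k, ts i ≤ t := by
  classical
  obtain hw | ⟨k, f, ts, hk, hf0, hfk, hlab, hmono, hlast⟩ := h
  · exact ⟨0, fun _ => w, 0, hw, rfl, by simp⟩
  have hhit : ∃ i, f i = w := ⟨k, hfk⟩
  have hle : Nat.find hhit ≤ k := Nat.find_min' hhit hfk
  refine ⟨Nat.find hhit, f, ts, hf0, Nat.find_spec hhit, fun i => Nat.find_min hhit,
    fun i hi => hlab i (hi.trans_le hle), fun i j hij hj => hmono i j hij (hj.trans_le hle),
    fun i hi => ?_⟩
  obtain hi' | rfl := (Nat.le_sub_one_of_lt (hi.trans_le hle)).lt_or_eq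
  · exact (hmono i _ hi' (by omega)).le.trans hlast
  · exact hlast

variable {r k : ℕ}

/-- The slots traversed by the walk with successive vertices `f` that uses the label number `l j`
on its step `j`. -/
def walkSlots (f : Fin (k + 1) → V) (l : Fin k → Fin r) : Fin k → Slot V r :=
  fun j => (s(f j.castSucc, f j.succ), l j)

variable [Fintype V] [DecidableEq V]

/-- The event that no label on an edge at `w` has its value in `I`. -/
def quiet (r : ℕ) (I : Set ℝ) (w : V) : Set (Slot V r → ℝ) :=
  (starSlots r w : Set (Slot V r)).pi fun _ => Iᶜ

/-- The event that a given labelled walk is temporal, reaches its endpoint `w` only at its last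
step and by time `a`, and that `w` is quiet during `(a, b]`. -/
def earlyWalk (a b : ℝ) (f : Fin (k + 1) → V) (l : Fin k → Fin r) : Set (Slot V r → ℝ) :=
  {X | (∀ j : Fin k, f j.castSucc ≠ f (Fin.last k)) ∧
    (StrictMono (X ∘ walkSlots f l) ∧ ∀ j, (X ∘ walkSlots f l) j ∈ Iic a) ∧
    X ∈ quiet r (Ioc a b) (f (Fin.last k))}

/-- The vertices from which an early walk to `w` starts. -/
def earlySources (a b : ℝ) (X : Slot V r → ℝ) (w : V) : Set V :=
  {v | ∃ (k : ℕ) (f : Fin (k + 1) → V) (l : Fin k → Fin r),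
    X ∈ earlyWalk a b f l ∧ f 0 = v ∧ f (Fin.last k) = w}

-- Cut at the first visit to `w`: the label of the last step is at most `b` and, as `w` is quiet,
-- not in `(a, b]`.
lemma exists_mem_earlySources {a b t : ℝ} {X : Slot V r → ℝ} {S : Set V} {w : V}
    (hw : X ∈ quiet r (Ioc a b) w) (ht : t < rank (sampleOf X) b)
    (hreach : w ∈ ball (orderDisc (sampleOf X)) S t) : ∃ u ∈ S, u ∈ earlySources a b X w := by
  obtain ⟨k, f, ts, hf0, rfl, hfirst, hlab, hmono, hle⟩ := exists_firstHit_of_reachBy hreach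
  have hstep : ∀ j : Fin k, ¬s(f j, f (j + 1)).IsDiag ∧
      ∃ i : Fin r, rank (sampleOf X) (X (s(f j, f (j + 1)), i)) = ts j := by
    intro j
    have := hlab j j.2
    rw [orderDisc] at this
    split_ifs at this with hdiag
    · simp at this
    · obtain ⟨i, -, hi⟩ := Finset.mem_image.1 this
      exact ⟨hdiag, i, hi⟩
  choose hloop l hl using hstep
  set g : Fin (k + 1) → V := fun j => f j
  have hlt : ∀ j, X (walkSlots g l j) < b := fun j =>
    (rank_mono (sampleOf X)).reflect_lt <| by
      exact_mod_cast ((hl j).trans_le (hle j j.2)).trans_lt ht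
  have hstrict : StrictMono (X ∘ walkSlots g l) := fun i j hij =>
    (rank_mono (sampleOf X)).reflect_lt <| by
      have := hmono i j hij j.2
      rw [← hl i, ← hl j] at this
      exact_mod_cast this
  refine ⟨f 0, hf0, k, g, l, ⟨fun j => hfirst j j.2, ⟨hstrict, fun j => ?_⟩, hw⟩, rfl, rfl⟩
  obtain _ | k := k
  · exact j.elim0
  refine (hstrict.monotone (Fin.le_last j)).trans (not_lt.1 fun ha => ?_)
  exact hw _ (mem_starSlots.2 ⟨hloop _, Sym2.mem_mk_right _ _⟩) ⟨ha, (hlt _).le⟩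

variable (V r) in
/-- The labelled walks with at most as many steps as there are slots, which is no restriction on
temporal walks. -/
abbrev LabelledWalk :=
  Σ k : Fin (Fintype.card (Slot V r) + 1), (Fin (k + 1) → V) × (Fin k → Fin r)

/-- The event that the labelled walk `W` is early. -/
def earlyEvent (a b : ℝ) (W : LabelledWalk V r) : Set (Slot V r → ℝ) := earlyWalk a b W.2.1 W.2.2

lemma sum_ncard_earlySources_le (a b : ℝ) (X : Slot V r → ℝ) :
    ∑ w, (earlySources a b X w).ncard ≤ occurrences Finset.univ (earlyEvent a b) X := by
  classical
  rw [occurrences, Finset.card_eq_sum_card_fiberwise (t := Finset.univ)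
    (f := fun W : LabelledWalk V r => W.2.1 (Fin.last _)) fun _ _ => Finset.mem_univ _]
  refine Finset.sum_le_sum fun w _ => ?_
  rw [← Set.ncard_coe_finset]
  refine (Set.ncard_le_ncard ?_ (toFinite _)).trans
    (Set.ncard_image_le (f := fun W : LabelledWalk V r => W.2.1 0) (toFinite _))
  rintro v ⟨k, f, l, hX, rfl, rfl⟩
  have hk : k ≤ Fintype.card (Slot V r) := by
    simpa using Fintype.card_le_of_injective _ hX.2.1.1.injective.of_comp
  exact ⟨⟨⟨k, Nat.lt_succ_of_le hk⟩, f, l⟩,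
    Finset.mem_filter.2 ⟨Finset.mem_filter.2 ⟨Finset.mem_univ _, hX⟩, rfl⟩, rfl⟩

end Walks

section Doubling

variable {V : Type*} [Fintype V]

lemma ofReal_le_doubleAll {Λ : TGraph V} {T : ℝ} {w₁ w₂ : V} (hw : w₁ ≠ w₂) {C : Finset V}
    (hC : 2 * C.card ≤ Fintype.card V)
    (h : ∀ S : Set V, Disjoint S C → ∀ t < T, w₁ ∉ ball Λ S t ∧ w₂ ∉ ball Λ S t) :
    ENNReal.ofReal T ≤ doubleAll Λ := by
  classical
  have hcard : 2 ≤ Fintype.card V := Finset.card_pair hw ▸ Finset.card_le_univ {w₁, w₂}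
  obtain ⟨S, hSC, hS⟩ : ∃ S ⊆ Cᶜ, S.card = Fintype.card V / 2 :=
    Finset.exists_subset_card_eq (by rw [Finset.card_compl]; omega)
  have hadm : (S : Set V).Nonempty ∧ 2 * (S : Set V).ncard ≤ Fintype.card V := by
    rw [Finset.coe_nonempty, ← Finset.card_pos, Set.ncard_coe_finset]
    omega
  refine le_iSup₂_of_le (S : Set V) hadm (le_iInf₂ fun t ht => ENNReal.ofReal_le_ofReal ?_)
  by_contra! htT
  have hmiss := h S (by exact_mod_cast Finset.subset_compl_iff_disjoint_right.1 hSC) t htT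
  have hsub : ball Λ S t ⊆ {w₁, w₂}ᶜ := by
    rintro v hv (rfl | rfl)
    exacts [hmiss.1 hv, hmiss.2 hv]
  have hball := Set.ncard_le_ncard hsub (toFinite _)
  rw [Set.ncard_compl, Set.ncard_pair hw, Nat.card_eq_fintype_card] at hball
  have := ht.2
  rw [Set.ncard_coe_finset] at this
  omega

end Doubling

section QuietPairs

lemma exists_ne_lt_of_sum_lt {ι : Type*} {s : Finset ι} {g : ι → ℝ} (hg : ∀ i ∈ s, 0 ≤ g i)
    {c : ℝ} (hc : 0 ≤ c) (h : ∑ i ∈ s, g i < (s.card - 1) * c) :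
    ∃ i ∈ s, ∃ j ∈ s, i ≠ j ∧ g i < c ∧ g j < c := by
  classical
  suffices hfew : 1 < (s.filter fun i => g i < c).card by
    obtain ⟨i, hi, j, hj, hij⟩ := Finset.one_lt_card.1 hfew
    rw [Finset.mem_filter] at hi hj
    exact ⟨i, hi.1, j, hj.1, hij, hi.2, hj.2⟩
  by_contra! hfew
  have hmany : (s.card : ℝ) - 1 ≤ (s.filter fun i => ¬g i < c).card := by
    have := Finset.card_filter_add_card_filter_not (s := s) fun i => g i < c
    rw [sub_le_iff_le_add]
    exact_mod_cast (by omega : s.card ≤ (s.filter fun i => ¬g i < c).card + 1)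
  refine h.not_ge ?_
  calc (s.card - 1) * c ≤ (s.filter fun i => ¬g i < c).card * c := by gcongr
    _ ≤ ∑ i ∈ s with ¬g i < c, g i := by
      rw [← nsmul_eq_mul]
      exact Finset.card_nsmul_le_sum _ _ _ fun i hi => not_lt.1 (Finset.mem_filter.1 hi).2
    _ ≤ ∑ i ∈ s, g i :=
      Finset.sum_le_sum_of_subset_of_nonneg (Finset.filter_subset _ _) fun i hi _ => hg i hi

variable {V : Type*} [Fintype V] [DecidableEq V] {r : ℕ} {a b m T : ℝ} {X : Slot V r → ℝ}

lemma exists_ne_quiet_ncard_earlySources_lt (hm : 4 ≤ m)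
    (hquiet : m / 2 < occurrences Finset.univ (quiet (V := V) r (Ioc a b)) X)
    (hearly : (occurrences Finset.univ (earlyEvent a b) X : ℝ) < Fintype.card V * m / 16) :
    ∃ w₁ w₂, w₁ ≠ w₂ ∧ ∀ w ∈ ({w₁, w₂} : Set V), X ∈ quiet r (Ioc a b) w ∧
      ((earlySources a b X w).ncard : ℝ) < Fintype.card V / 4 := by
  classical
  set Q := Finset.univ.filter fun w : V => X ∈ quiet r (Ioc a b) w
  have hQ : m / 2 < Q.card := by simpa [occurrences, Q] using hquiet
  have hsum : ∑ w ∈ Q, ((earlySources a b X w).ncard : ℝ) < (Q.card - 1) * (Fintype.card V / 4) :=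
    calc ∑ w ∈ Q, ((earlySources a b X w).ncard : ℝ)
        ≤ ∑ w, ((earlySources a b X w).ncard : ℝ) :=
          Finset.sum_le_sum_of_subset_of_nonneg (Finset.subset_univ _) fun _ _ _ => by positivity
      _ ≤ _ := by exact_mod_cast sum_ncard_earlySources_le a b X
      _ < Fintype.card V * m / 16 := hearly
      _ = (m / 4) * (Fintype.card V / 4) := by ring
      _ ≤ (Q.card - 1) * (Fintype.card V / 4) := by gcongr; linarith
  obtain ⟨w₁, h₁, w₂, h₂, hne, hlt₁, hlt₂⟩ :=
    exists_ne_lt_of_sum_lt (fun _ _ => by positivity) (by positivity) hsum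
  simp only [Q, Finset.mem_filter, Finset.mem_univ, true_and] at h₁ h₂
  exact ⟨w₁, w₂, hne, by rintro w (rfl | rfl) <;> constructor <;> assumption⟩

-- No set avoiding the early sources of two quiet vertices can reach either of them before time
-- `b`, and half of the vertices are available for such a set.
lemma ofReal_le_doubleAll_orderDisc (hm : 4 ≤ m) (hrank : T ≤ rank (sampleOf X) b)
    (hquiet : m / 2 < occurrences Finset.univ (quiet (V := V) r (Ioc a b)) X)
    (hearly : (occurrences Finset.univ (earlyEvent a b) X : ℝ) < Fintype.card V * m / 16) :
    ENNReal.ofReal T ≤ doubleAll (orderDisc (sampleOf X)) := by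
  classical
  obtain ⟨w₁, w₂, hne, hw⟩ := exists_ne_quiet_ncard_earlySources_lt hm hquiet hearly
  set C : Finset V := (earlySources a b X w₁ ∪ earlySources a b X w₂).toFinset
  have hC : 2 * C.card ≤ Fintype.card V := by
    have hunion : (C.card : ℝ) ≤
        (earlySources a b X w₁).ncard + (earlySources a b X w₂).ncard := by
      exact_mod_cast (Set.ncard_eq_toFinset_card' _).symm.trans_le (Set.ncard_union_le _ _)
    have := (hw w₁ (by simp)).2
    have := (hw w₂ (by simp)).2
    exact_mod_cast (by linarith : 2 * (C.card : ℝ) ≤ Fintype.card V)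
  have hmiss : ∀ S : Set V, Disjoint S C → ∀ t < T, ∀ w ∈ ({w₁, w₂} : Set V),
      w ∉ ball (orderDisc (sampleOf X)) S t := by
    intro S hS t ht w hwmem hreach
    obtain ⟨u, huS, hu⟩ := exists_mem_earlySources (hw w hwmem).1 (ht.trans_le hrank) hreach
    refine Set.disjoint_left.1 hS huS ?_
    rw [Set.coe_toFinset]
    rcases hwmem with rfl | rfl
    exacts [.inl hu, .inr hu]
  exact ofReal_le_doubleAll hne hC fun S hS t ht =>
    ⟨hmiss S hS t ht w₁ (by simp), hmiss S hS t ht w₂ (by simp)⟩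

end QuietPairs

section Probabilities

variable {V : Type*} [Fintype V] [DecidableEq V] {r : ℕ} (ν : Measure ℝ) [IsProbabilityMeasure ν]

lemma pi_real_rank_sampleOf_le (b : ℝ) {η : ℝ} (hη : 0 < η)
    (hpos : 0 < (edgeSlots V r).card * ν.real (Iic b)) :
    (Measure.pi fun _ : Slot V r => ν).real
      {X | (rank (sampleOf X) b : ℝ) ≤ (1 - η) * ((edgeSlots V r).card * ν.real (Iic b))} ≤
      ((edgeSlots V r).card * ν.real (Iic b))⁻¹ / η ^ 2 := by
  have hsingle : ∀ p, (Measure.pi fun _ : Slot V r => ν).real {X | X p ≤ b} = ν.real (Iic b) :=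
    fun p => by
      have := pi_real_pi ν {p} (Iic b)
      rw [Finset.coe_singleton, Set.singleton_pi, Finset.card_singleton, pow_one] at this
      exact this
  have hpair : ∀ p p', p ≠ p' → (Measure.pi fun _ : Slot V r => ν).real
      ({X | X p ≤ b} ∩ {X | X p' ≤ b}) = ν.real (Iic b) ^ 2 := fun p p' hp => by
      have := pi_real_pi ν {p, p'} (Iic b)
      rw [Finset.card_pair hp, Finset.coe_pair, Set.insert_pi, Set.singleton_pi] at this
      exact this
  simp only [rank_sampleOf]
  have := measureReal_occurrences_le_le (P := Measure.pi fun _ : Slot V r => ν)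
    (s := edgeSlots V r) (E := fun p => {X | X p ≤ b}) (δ := 0)
    (fun p _ => measurableSet_le (measurable_pi_apply p) measurable_const) le_rfl hη
    (by simp [hsingle]) hpos (fun p _ p' _ hp => by rw [hpair p p' hp, hsingle, hsingle, sq]; simp)
  simpa using this

variable {I : Set ℝ}

lemma pi_real_quiet (w : V) : (Measure.pi fun _ : Slot V r => ν).real (quiet r I w) =
    ν.real Iᶜ ^ (r * (Fintype.card V - 1)) := by
  rw [quiet, pi_real_pi, card_starSlots]

lemma measurableSet_quiet (hI : MeasurableSet I) (w : V) : MeasurableSet (quiet r I w) :=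
  .pi (Finset.countable_toSet _) fun _ _ => hI.compl

lemma pi_real_quiet_inter_le (hI : 0 < ν.real Iᶜ) {v w : V} (hvw : v ≠ w) :
    (Measure.pi fun _ : Slot V r => ν).real (quiet r I v ∩ quiet r I w) ≤
      (ν.real Iᶜ ^ r)⁻¹ * ((Measure.pi fun _ : Slot V r => ν).real (quiet r I v) *
        (Measure.pi fun _ : Slot V r => ν).real (quiet r I w)) := by
  have hunion : quiet r I v ∩ quiet r I w =
      ((starSlots r v ∪ starSlots r w : Finset _) : Set (Slot V r)).pi fun _ => Iᶜ := by
    rw [quiet, quiet, ← Set.union_pi, Finset.coe_union]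
  have hcard : (starSlots r v).card + (starSlots r w).card ≤
      r + (starSlots r v ∪ starSlots r w).card := by
    have := Finset.card_union_add_card_inter (starSlots r v) (starSlots r w)
    have := card_starSlots_inter_le r hvw
    omega
  rw [hunion, quiet, quiet, pi_real_pi, pi_real_pi, pi_real_pi, ← pow_add, le_inv_mul_iff₀
    (by positivity), ← pow_add]
  exact pow_le_pow_of_le_one measureReal_nonneg measureReal_le_one hcard

lemma pi_real_occurrences_quiet_le (hI : MeasurableSet I) (hpos : 0 < ν.real Iᶜ) {m : ℝ}
    (hm : 0 < m) (hmV : m = Fintype.card V * ν.real Iᶜ ^ (r * (Fintype.card V - 1))) :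
    (Measure.pi fun _ : Slot V r => ν).real
      {X | (occurrences Finset.univ (quiet (V := V) r I) X : ℝ) ≤ m / 2} ≤
      4 * (m⁻¹ + ((ν.real Iᶜ ^ r)⁻¹ - 1)) := by
  have := measureReal_occurrences_le_le (P := Measure.pi fun _ : Slot V r => ν)
    (s := Finset.univ) (E := quiet (V := V) r I) (δ := (ν.real Iᶜ ^ r)⁻¹ - 1) (η := 1 / 2)
    (fun w _ => measurableSet_quiet hI w)
    (sub_nonneg.2 <| (one_le_inv₀ (by positivity)).2 <|
      pow_le_one₀ measureReal_nonneg measureReal_le_one)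
    (by norm_num) (by simp [pi_real_quiet, hmV]) hm
    (fun v _ w _ hvw => by simpa using pi_real_quiet_inter_le ν hpos hvw)
  convert this using 1 <;> ring_nf

variable {k : ℕ} {a b : ℝ}

lemma measurableSet_earlyWalk (f : Fin (k + 1) → V) (l : Fin k → Fin r) :
    MeasurableSet (earlyWalk a b f l) :=
  .inter (.const _) <| .inter
    ((measurableSet_strictMono_mem measurableSet_Iic).preimage
      (by fun_prop : Measurable fun X : Slot V r → ℝ => X ∘ walkSlots f l))
    (measurableSet_quiet measurableSet_Ioc _)

-- Only the last step of such a walk uses an edge at the endpoint.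
lemma card_starSlots_le_card_sdiff_add_one {f : Fin (k + 1) → V}
    (hf : ∀ j : Fin k, f j.castSucc ≠ f (Fin.last k)) (l : Fin k → Fin r) :
    (starSlots r (f (Fin.last k))).card ≤
      (starSlots r (f (Fin.last k)) \ Finset.univ.image (walkSlots f l)).card + 1 := by
  have hlast : ∀ j, walkSlots f l j ∈ starSlots r (f (Fin.last k)) → j.succ = Fin.last k := by
    intro j hj
    rcases Sym2.mem_iff.1 (mem_starSlots.1 hj).2 with h | h
    · exact absurd h.symm (hf j)
    · obtain ⟨i, hi⟩ | h' := j.succ.eq_castSucc_or_eq_last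
      · exact absurd (hi ▸ h.symm) (hf i)
      · exact h'
  have hone : (starSlots r (f (Fin.last k)) ∩ Finset.univ.image (walkSlots f l)).card ≤ 1 := by
    refine Finset.card_le_one.2 fun p hp p' hp' => ?_
    simp only [Finset.mem_inter, Finset.mem_image, Finset.mem_univ, true_and] at hp hp'
    obtain ⟨hp, i, rfl⟩ := hp
    obtain ⟨hp', j, rfl⟩ := hp'
    rw [Fin.succ_injective k ((hlast i hp).trans (hlast j hp').symm)]
  have := Finset.card_sdiff_add_card_inter (starSlots r (f (Fin.last k)))
    (Finset.univ.image (walkSlots f l))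
  omega

lemma mul_pi_real_earlyWalk_le (f : Fin (k + 1) → V) (l : Fin k → Fin r) :
    ν.real (Ioc a b)ᶜ * (Measure.pi fun _ : Slot V r => ν).real (earlyWalk a b f l) ≤
      ν.real (Iic a) ^ k / k.factorial * ν.real (Ioc a b)ᶜ ^ (r * (Fintype.card V - 1)) := by
  set q := ν.real (Ioc a b)ᶜ
  -- Strictly increasing labels occupy distinct slots, so there is no need to pass to a path.
  by_cases h : (∀ j : Fin k, f j.castSucc ≠ f (Fin.last k)) ∧ Function.Injective (walkSlots f l)
  swap
  · have hempty : earlyWalk a b f l = ∅ := by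
      refine eq_empty_of_forall_notMem fun X hX => h ⟨hX.1, ?_⟩
      exact hX.2.1.1.injective.of_comp
    rw [hempty, measureReal_empty, mul_zero]
    positivity
  obtain ⟨hf, hinj⟩ := h
  set D := starSlots r (f (Fin.last k)) \ Finset.univ.image (walkSlots f l)
  set U : Set (Fin k → ℝ) := {x | StrictMono x ∧ ∀ j, x j ∈ Iic a}
  have hsub : earlyWalk a b f l ⊆
      {X | X ∘ walkSlots f l ∈ U} ∩ (D : Set (Slot V r)).pi fun _ => (Ioc a b)ᶜ :=
    fun X hX => ⟨hX.2.1, fun p hp => hX.2.2 p (Finset.sdiff_subset hp)⟩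
  calc q * (Measure.pi fun _ : Slot V r => ν).real (earlyWalk a b f l)
      ≤ q * ((Measure.pi fun _ : Fin k => ν).real U * q ^ D.card) := by
        rw [← pi_real_comp_inter_pi ν hinj (by simp [D])
          (measurableSet_strictMono_mem measurableSet_Iic) measurableSet_Ioc.compl]
        exact mul_le_mul_of_nonneg_left (measureReal_mono hsub) measureReal_nonneg
    _ = (Measure.pi fun _ : Fin k => ν).real U * q ^ (D.card + 1) := by ring
    _ ≤ ν.real (Iic a) ^ k / k.factorial * q ^ (r * (Fintype.card V - 1)) := by
        have hexp : r * (Fintype.card V - 1) ≤ D.card + 1 :=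
          card_starSlots r (f (Fin.last k)) ▸ card_starSlots_le_card_sdiff_add_one hf l
        gcongr ?_ * ?_
        · exact pi_real_strictMono_mem_le ν k measurableSet_Iic
        · exact pow_le_pow_of_le_one measureReal_nonneg measureReal_le_one hexp

-- There are `n ^ (k + 1) * r ^ k` labelled walks with `k` steps, so the bounds `p ^ k / k!` add up
-- to at most `n` times the exponential series of `r n p`.
lemma mul_sum_pi_real_earlyWalk_le :
    ν.real (Ioc a b)ᶜ * ∑ W : LabelledWalk V r,
      (Measure.pi fun _ : Slot V r => ν).real (earlyEvent a b W) ≤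
      Fintype.card V * Real.exp (r * Fintype.card V * ν.real (Iic a)) *
        ν.real (Ioc a b)ᶜ ^ (r * (Fintype.card V - 1)) := by
  set n := (Fintype.card V : ℝ) with hn
  set p := ν.real (Iic a)
  set Q := ν.real (Ioc a b)ᶜ ^ (r * (Fintype.card V - 1))
  calc ν.real (Ioc a b)ᶜ * ∑ W : LabelledWalk V r,
        (Measure.pi fun _ : Slot V r => ν).real (earlyEvent a b W)
      ≤ ∑ W : LabelledWalk V r, p ^ (W.1 : ℕ) / (W.1 : ℕ).factorial * Q := by
        rw [Finset.mul_sum]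
        exact Finset.sum_le_sum fun W _ => mul_pi_real_earlyWalk_le ν W.2.1 W.2.2
    _ = n * (∑ k ∈ Finset.range (Fintype.card (Slot V r) + 1),
          (r * n * p) ^ k / k.factorial) * Q := by
        rw [Fintype.sum_sigma, Finset.sum_range, Finset.mul_sum, Finset.sum_mul]
        refine Finset.sum_congr rfl fun k _ => ?_
        simp only [Finset.sum_const, Finset.card_univ, nsmul_eq_mul, Fintype.card_prod,
          Fintype.card_fun, Fintype.card_fin, Nat.cast_mul, Nat.cast_pow, ← hn]
        ring
    _ ≤ n * Real.exp (r * n * p) * Q := by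
        gcongr
        exact Real.sum_le_exp_of_nonneg (by positivity) _

lemma pi_real_occurrences_earlyWalk_ge_le (hpos : 0 < ν.real (Ioc a b)ᶜ) {m : ℝ} (hm : 0 < m)
    (hmV : m = Fintype.card V * ν.real (Ioc a b)ᶜ ^ (r * (Fintype.card V - 1))) :
    (Measure.pi fun _ : Slot V r => ν).real
      {X | Fintype.card V * m / 16 ≤ (occurrences Finset.univ (earlyEvent a b) X : ℝ)} ≤
      16 * Real.exp (r * Fintype.card V * ν.real (Iic a)) /
        (Fintype.card V * ν.real (Ioc a b)ᶜ) := by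
  have hV : (0 : ℝ) < Fintype.card V :=
    pos_of_mul_pos_left (hmV ▸ hm) (by positivity)
  have hmarkov := mul_measureReal_le_occurrences_le (P := Measure.pi fun _ : Slot V r => ν)
    (s := Finset.univ) (E := earlyEvent (V := V) (r := r) a b)
    (fun W _ => measurableSet_earlyWalk _ _) (Fintype.card V * m / 16)
  have hsum := (mul_le_mul_of_nonneg_left hmarkov hpos.le).trans
    (mul_sum_pi_real_earlyWalk_le (V := V) (r := r) (a := a) (b := b) ν)
  rw [mul_right_comm, ← hmV] at hsum
  rw [le_div_iff₀ (by positivity)]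
  refine le_of_mul_le_mul_left ?_ hm
  linarith

lemma pi_real_not_ofReal_le_doubleAll_le (hpos : 0 < ν.real (Ioc a b)ᶜ) {m : ℝ} (hm : 4 ≤ m)
    (hmV : m = Fintype.card V * ν.real (Ioc a b)ᶜ ^ (r * (Fintype.card V - 1)))
    {M : ℝ} (hM : 0 < M) (hMV : M = (edgeSlots V r).card * ν.real (Iic b)) {η T : ℝ} (hη : 0 < η)
    (hT : T ≤ (1 - η) * M) :
    (Measure.pi fun _ : Slot V r => ν).real
      {X | ENNReal.ofReal T ≤ doubleAll (orderDisc (sampleOf X))}ᶜ ≤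
      M⁻¹ / η ^ 2 + 4 * (m⁻¹ + ((ν.real (Ioc a b)ᶜ ^ r)⁻¹ - 1)) +
        16 * Real.exp (r * Fintype.card V * ν.real (Iic a)) /
          (Fintype.card V * ν.real (Ioc a b)ᶜ) := by
  set fewRanks := {X : Slot V r → ℝ | (rank (sampleOf X) b : ℝ) ≤ (1 - η) * M}
  set fewQuiet := {X : Slot V r → ℝ |
    (occurrences Finset.univ (quiet (V := V) r (Ioc a b)) X : ℝ) ≤ m / 2}
  set manyEarly := {X : Slot V r → ℝ |
    Fintype.card V * m / 16 ≤ (occurrences Finset.univ (earlyEvent a b) X : ℝ)}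
  have hsub : {X | ENNReal.ofReal T ≤ doubleAll (orderDisc (sampleOf X))}ᶜ ⊆
      fewRanks ∪ fewQuiet ∪ manyEarly := by
    rw [compl_subset_comm]
    intro X hX
    simp only [fewRanks, fewQuiet, manyEarly, mem_compl_iff, mem_union, mem_ofPred_eq, not_or,
      not_le] at hX
    exact ofReal_le_doubleAll_orderDisc hm (hT.trans hX.1.1.le) hX.1.2 hX.2
  refine (measureReal_mono hsub).trans <| (measureReal_union_le _ _).trans <|
    add_le_add ((measureReal_union_le _ _).trans <| add_le_add ?_ ?_) ?_
  · subst hMV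
    exact pi_real_rank_sampleOf_le ν b hη hM
  · exact pi_real_occurrences_quiet_le ν measurableSet_Ioc hpos (by linarith) hmV
  · exact pi_real_occurrences_earlyWalk_ge_le ν hpos (by linarith) hmV

end Probabilities

section Uniform

instance : IsProbabilityMeasure unif01 := ⟨by simp [unif01]⟩

lemma unif01_real_Iic {x : ℝ} (h₀ : 0 ≤ x) (h₁ : x ≤ 1) : unif01.real (Iic x) = x := by
  rw [unif01, measureReal_restrict_apply measurableSet_Iic, inter_comm, Ioc_inter_Iic,
    min_eq_right h₁, Real.volume_real_Ioc_of_le h₀, sub_zero]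

lemma unif01_real_compl_Ioc {a b : ℝ} (h₀ : 0 ≤ a) (hab : a ≤ b) (h₁ : b ≤ 1) :
    unif01.real (Ioc a b)ᶜ = 1 - (b - a) := by
  rw [probReal_compl_eq_one_sub measurableSet_Ioc, unif01, measureReal_restrict_apply
    measurableSet_Ioc, inter_eq_left.2 (Ioc_subset_Ioc h₀ h₁), Real.volume_real_Ioc_of_le hab]

end Uniform

section Asymptotics

variable {r : ℕ} {η : ℝ}

lemma tendsto_log_natCast_atTop : Tendsto (fun n : ℕ => Real.log n) atTop atTop :=
  Real.tendsto_log_atTop.comp tendsto_natCast_atTop_atTop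

/-- The time `a = (1 - η) log n / (r n)`: up to `a` few vertices are connected to a typical vertex,
while on `(a, 2a]` about `n ^ η` vertices are quiet. -/
def cutoff (r : ℕ) (η : ℝ) (n : ℕ) : ℝ := (1 - η) * Real.log n / (r * n)

lemma cutoff_nonneg (hη : η ≤ 1) (n : ℕ) : 0 ≤ cutoff r η n :=
  div_nonneg (mul_nonneg (sub_nonneg.2 hη) (Real.log_natCast_nonneg n)) (by positivity)

lemma mul_cutoff (hr : 0 < r) (n : ℕ) : r * n * cutoff r η n = (1 - η) * Real.log n := by
  rcases n.eq_zero_or_pos with rfl | hn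
  · simp
  · exact mul_div_cancel₀ _ (by positivity)

lemma card_edgeSlots_mul_cutoff (hr : 0 < r) (n : ℕ) :
    (edgeSlots (Fin n) r).card * (2 * cutoff r η n) = (n - 1) * ((1 - η) * Real.log n) := by
  rw [card_edgeSlots, Fintype.card_fin, ← mul_cutoff hr]
  push_cast [Nat.cast_choose_two]
  ring

lemma tendsto_cutoff (r : ℕ) (η : ℝ) : Tendsto (cutoff r η) atTop (𝓝 0) := by
  have hlog : Tendsto (fun n : ℕ => Real.log n / (n : ℝ)) atTop (𝓝 0) :=
    Real.isLittleO_log_id_atTop.tendsto_div_nhds_zero.comp tendsto_natCast_atTop_atTop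
  have hscaled := hlog.const_mul ((1 - η) / r)
  rw [mul_zero] at hscaled
  exact hscaled.congr fun n => div_mul_div_comm _ _ _ _

lemma exp_neg_div_one_sub_le {y : ℝ} (hy : y < 1) : Real.exp (-(y / (1 - y))) ≤ 1 - y := by
  have hpos : 0 < 1 - y := sub_pos.2 hy
  rw [← Real.le_log_iff_exp_le hpos]
  convert Real.one_sub_inv_le_log_of_pos hpos using 1
  field_simp
  ring

/-- The expected number of vertices that are quiet during `(a, 2a]`, where `a` is the cutoff. -/
def expectedQuiet (r : ℕ) (η : ℝ) (n : ℕ) : ℝ := n * (1 - cutoff r η n) ^ (r * (n - 1))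

lemma tendsto_expectedQuiet (hr : 0 < r) (hη₀ : 0 < η) (hη₁ : η ≤ 1) :
    Tendsto (expectedQuiet r η) atTop atTop := by
  have hcut := tendsto_cutoff r η
  have hexp : Tendsto (fun n : ℕ => Real.log n * (1 - (1 - η) / (1 - cutoff r η n))) atTop
      atTop := by
    refine tendsto_log_natCast_atTop.atTop_mul_pos (C := η) hη₀ ?_
    simpa using ((tendsto_const_nhds (x := 1 - η)).div (hcut.const_sub 1) (by simp)).const_sub 1
  refine tendsto_atTop_mono' _ ?_ (Real.tendsto_exp_atTop.comp hexp)
  filter_upwards [hcut.eventually_lt_const one_pos, eventually_gt_atTop 0] with n hlt hn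
  have hbase : 0 ≤ 1 - cutoff r η n := by linarith
  have hexponent : Real.log n * (1 - (1 - η) / (1 - cutoff r η n)) =
      Real.log n + (r * n : ℕ) * -(cutoff r η n / (1 - cutoff r η n)) := by
    push_cast
    linear_combination (1 - cutoff r η n)⁻¹ * mul_cutoff (η := η) hr n
  calc Real.exp (Real.log n * (1 - (1 - η) / (1 - cutoff r η n)))
      = n * Real.exp (-(cutoff r η n / (1 - cutoff r η n))) ^ (r * n) := by
        rw [hexponent, Real.exp_add, Real.exp_log (by positivity), Real.exp_nat_mul]
    _ ≤ n * (1 - cutoff r η n) ^ (r * n) := by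
        gcongr
        exact exp_neg_div_one_sub_le hlt
    _ ≤ n * (1 - cutoff r η n) ^ (r * (n - 1)) :=
        mul_le_mul_of_nonneg_left (pow_le_pow_of_le_one hbase (sub_le_self 1 (cutoff_nonneg hη₁ n))
          (Nat.mul_le_mul_left r (n.sub_le 1))) n.cast_nonneg

/-- The bound of `pi_real_not_ofReal_le_doubleAll_le` for uniform labels, with `a` the cutoff and
`b = 2a`. -/
def failureBound (r : ℕ) (η : ℝ) (n : ℕ) : ℝ :=
  ((n - 1) * ((1 - η) * Real.log n))⁻¹ / η ^ 2 +
    4 * ((expectedQuiet r η n)⁻¹ + (((1 - cutoff r η n) ^ r)⁻¹ - 1)) +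
      16 * Real.exp ((1 - η) * Real.log n) / (n * (1 - cutoff r η n))

lemma tendsto_failureBound (hr : 0 < r) (hη₀ : 0 < η) (hη₁ : η < 1) :
    Tendsto (failureBound r η) atTop (𝓝 0) := by
  have hgap : Tendsto (fun n => 1 - cutoff r η n) atTop (𝓝 1) := by
    simpa using (tendsto_cutoff r η).const_sub 1
  have hranks : Tendsto (fun n : ℕ => ((n - 1) * ((1 - η) * Real.log n))⁻¹ / η ^ 2) atTop
      (𝓝 0) := by
    have : Tendsto (fun n : ℕ => ((n : ℝ) - 1) * ((1 - η) * Real.log n)) atTop atTop :=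
      (tendsto_atTop_add_const_right _ (-1) tendsto_natCast_atTop_atTop).atTop_mul_atTop₀
        (tendsto_log_natCast_atTop.const_mul_atTop (sub_pos.2 hη₁))
    simpa using this.inv_tendsto_atTop.div_const (η ^ 2)
  have hquiet : Tendsto (fun n => 4 * ((expectedQuiet r η n)⁻¹ +
      (((1 - cutoff r η n) ^ r)⁻¹ - 1))) atTop (𝓝 0) := by
    have hpow : Tendsto (fun n => ((1 - cutoff r η n) ^ r)⁻¹ - 1) atTop (𝓝 0) := by
      simpa using ((hgap.pow r).inv₀ (by simp)).sub_const 1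
    simpa using ((tendsto_expectedQuiet hr hη₀ hη₁.le).inv_tendsto_atTop.add hpow).const_mul 4
  have hearly : Tendsto (fun n : ℕ => 16 * Real.exp ((1 - η) * Real.log n) /
      (n * (1 - cutoff r η n))) atTop (𝓝 0) := by
    have hdecay : Tendsto (fun n : ℕ => Real.exp (-(η * Real.log n))) atTop (𝓝 0) :=
      Real.tendsto_exp_neg_atTop_nhds_zero.comp (tendsto_log_natCast_atTop.const_mul_atTop hη₀)
    have hlim := (hdecay.const_mul 16).div hgap one_ne_zero
    rw [mul_zero, zero_div] at hlim
    refine hlim.congr' ?_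
    filter_upwards [eventually_gt_atTop 0] with n hn
    have hexp : Real.exp ((1 - η) * Real.log n) = n * Real.exp (-(η * Real.log n)) := by
      rw [one_sub_mul, sub_eq_add_neg, Real.exp_add, Real.exp_log (by positivity)]
    rw [Pi.div_apply, hexp, mul_left_comm, mul_div_mul_left _ _ (by positivity)]
  have hsum := (hranks.add hquiet).add hearly
  rw [add_zero, add_zero] at hsum
  exact hsum

lemma eventually_mul_log_le {ε : ℝ} (hηε : 2 * η < ε) :
    ∀ᶠ n : ℕ in atTop,
      (1 - ε) * n * Real.log n ≤ (1 - η) * ((n - 1) * ((1 - η) * Real.log n)) := by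
  have hlarge := (tendsto_natCast_atTop_atTop (R := ℝ)).const_mul_atTop (sub_pos.2 hηε)
  filter_upwards [hlarge.eventually_ge_atTop ((1 - η) ^ 2)] with n hn
  calc (1 - ε) * n * Real.log n ≤ ((1 - η) ^ 2 * (n - 1)) * Real.log n := by
        refine mul_le_mul_of_nonneg_right ?_ (Real.log_natCast_nonneg n)
        nlinarith [mul_nonneg (sq_nonneg η) (n.cast_nonneg : (0 : ℝ) ≤ n)]
    _ = (1 - η) * ((n - 1) * ((1 - η) * Real.log n)) := by ring

lemma eventually_pi_unif01_real_le_failureBound (hr : 0 < r) {ε : ℝ} (hη₀ : 0 < η) (hη₁ : η < 1)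
    (hηε : 2 * η < ε) : ∀ᶠ n : ℕ in atTop,
      (Measure.pi fun _ : Slot (Fin n) r => unif01).real {X |
        ENNReal.ofReal ((1 - ε) * n * Real.log n) ≤ doubleAll (orderDisc (sampleOf X))}ᶜ ≤
        failureBound r η n := by
  filter_upwards [(tendsto_expectedQuiet hr hη₀ hη₁.le).eventually_ge_atTop 4,
    (tendsto_cutoff r η).eventually_le_const (u := 1 / 2) (by norm_num),
    eventually_mul_log_le hηε, eventually_gt_atTop 1] with n hquiet hhalf hT hn
  set a := cutoff r η n
  have ha : 0 ≤ a := cutoff_nonneg hη₁.le n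
  have hq : unif01.real (Ioc a (2 * a))ᶜ = 1 - a := by
    rw [unif01_real_compl_Ioc ha (by linarith) (by linarith)]
    ring
  have hM : 0 < ((n : ℝ) - 1) * ((1 - η) * Real.log n) :=
    mul_pos (sub_pos.2 (by exact_mod_cast hn))
      (mul_pos (sub_pos.2 hη₁) (Real.log_pos (by exact_mod_cast hn)))
  have hbound := pi_real_not_ofReal_le_doubleAll_le (V := Fin n) (r := r) (a := a) (b := 2 * a)
    unif01 (by rw [hq]; linarith) hquiet (by rw [hq, expectedQuiet, Fintype.card_fin]) hM
    (by rw [unif01_real_Iic (by linarith) (by linarith), card_edgeSlots_mul_cutoff hr]) hη₀ hT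
  rwa [hq, unif01_real_Iic ha (by linarith), Fintype.card_fin, mul_cutoff hr] at hbound

end Asymptotics

/-- Lower bound for the doubling time of the order discretization of
`Γ_{[n]}(ψ)` with `ψ` degenerate at `r`: with high probability it is at least
`(1-ε)·n·log n`. -/
theorem statement19 (r : ℕ) (hr : 0 < r) (ε : ℝ) (hε : 0 < ε) :
    Tendsto (fun n : ℕ =>
        contModel (Fin n) (Measure.dirac r) {ω |
          ENNReal.ofReal ((1 - ε) * n * Real.log n) ≤ doubleAll (orderDisc ω)})
      atTop (𝓝 1) := by
  obtain ⟨η, hη₀, hη⟩ : ∃ η, 0 < η ∧ η < min 1 (ε / 2) := exists_between (by positivity)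
  obtain ⟨hη₁, hηε⟩ := lt_min_iff.1 hη
  simp only [contModel, model_dirac]
  refine tendsto_measure_map_one (fun n => measurable_sampleOf) ?_
  exact squeeze_zero' (Eventually.of_forall fun n => measureReal_nonneg)
    (eventually_pi_unif01_real_le_failureBound hr hη₀ hη₁ (by linarith))
    (tendsto_failureBound hr hη₀ hη₁)

end RTG
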